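/- arXiv:2003.11636 — 4 statements merged into one kernel-verified Lean document; each statement's English description precedes it below -/
import Mathlib

section
/- Let F and H be two right-continuous filtrations on a complete probability space, each containing all μ-null sets, and assume F and H are independent. Then the filtration G = F ∨ H (defined by G_t = F_t ⊔ H_t) is right-continuous, i.e., for every t ≥ 0 one has ⨅_{s > t} (F_s ⊔ H_s) = F_t ⊔ H_t. (Lemma A.4 (i).) -/
/-!
The heart of the matter is a statement about a nonempty family of σ-algebras `𝓐 i ≤ M`, each
containing the null sets, and one σ-algebra `B` independent of `M`:
`⨅ i, (𝓐 i ⊔ B) ≤ (⨅ i, 𝓐 i) ⊔ B` (`iInf_sup_le_of_indep`).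

Independence enters through two dual facts, for `A ≤ M`: an event `S ∈ M` satisfies
`E[1_S | A ⊔ B] = E[1_S | A]` (`condExp_sup_of_indep`), and an event `D ∈ A ⊔ B` satisfies
`E[1_D | M] = E[1_D | A]` (`condExp_eq_of_mem_sup`). The second follows from the first because
conditional expectation is self-adjoint.

Let `C` belong to every `𝓐 i ⊔ B`, put `A₀ = ⨅ i, 𝓐 i`, and let `b ∈ B`. By the second fact
`E[1_{b ∩ C} | M]` agrees almost surely with an `𝓐 i`-measurable function for every `i`; since the
null sets lie in every `𝓐 i`, it is `A₀`-measurable, so it equals `E[1_{b ∩ C} | A₀]`. Hence, for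
`a ∈ M`, self-adjointness and the first fact give
`∫_{a ∩ b} E[1_C | A₀ ⊔ B] = ∫_a E[1_{b ∩ C} | A₀] = μ (a ∩ b ∩ C)`.
The sets `a ∩ b` form a π-system generating `M ⊔ B`, which contains `C`, so
`1_C = E[1_C | A₀ ⊔ B]` almost surely and `C ∈ A₀ ⊔ B`, again because null sets are included.

For the filtrations, monotonicity gives `⨅ s, (F s ⊔ H s) ≤ ⨅ s, ⨅ r, (F s ⊔ H r)`, and the
family version is applied to each of the two infima in turn. No martingale convergence is needed.
-/

open MeasureTheory ProbabilityTheory Filter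
open scoped NNReal

section Aux

variable {Ω : Type*} {m : MeasurableSpace Ω} {μ : Measure Ω}

/-- The real-valued indicator function of an event. -/
noncomputable abbrev ind (S : Set Ω) : Ω → ℝ := S.indicator fun _ => 1

lemma integrable_ind [IsProbabilityMeasure μ] {S : Set Ω} (hS : MeasurableSet S) :
    Integrable (ind S) μ :=
  (integrable_const (1 : ℝ)).indicator hS

/-- Conditional expectation is self-adjoint, on indicators. -/
lemma setIntegral_condExp_comm [IsProbabilityMeasure μ] {N : MeasurableSpace Ω} (hN : N ≤ m)
    {S T : Set Ω} (hS : MeasurableSet[m] S) (hT : MeasurableSet[m] T) :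
    ∫ x in S, (μ[ind T | N]) x ∂μ = ∫ x in T, (μ[ind S | N]) x ∂μ := by
  -- Both sides equal `∫ E[1_S | N] * E[1_T | N]`.
  have key : ∀ {S T : Set Ω}, MeasurableSet[m] S → MeasurableSet[m] T →
      ∫ x in S, (μ[ind T | N]) x ∂μ = ∫ x, (μ[ind S | N] * μ[ind T | N]) x ∂μ := by
    intro S T hS hT
    have e : ind S * μ[ind T | N] = S.indicator (μ[ind T | N]) := by
      ext x; by_cases hx : x ∈ S <;> simp [ind, hx]
    have hi : Integrable (ind S * μ[ind T | N]) μ := by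
      rw [e]; exact integrable_condExp.indicator hS
    have h := condExp_mul_of_stronglyMeasurable_right (μ := μ) (m := N) (f := ind S)
      (g := μ[ind T | N]) stronglyMeasurable_condExp hi (integrable_ind hS)
    rw [← integral_congr_ae h, integral_condExp hN, e, integral_indicator hS]
  rw [key hS hT, key hT hS, mul_comm]

lemma setIntegral_inter_of_indep [IsProbabilityMeasure μ] {M B : MeasurableSpace Ω}
    (hM : M ≤ m) (hB : B ≤ m) (hind : Indep M B μ) {f : Ω → ℝ} (hf : StronglyMeasurable[M] f)
    (hfi : Integrable f μ) {a b : Set Ω} (ha : MeasurableSet[M] a) (hb : MeasurableSet[B] b) :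
    ∫ x in a ∩ b, f x ∂μ = μ.real b * ∫ x in a, f x ∂μ := by
  have h := condExp_indep_eq hM hB (hf.indicator ha) hind
  have h2 := setIntegral_condExp hB (hfi.indicator (hM a ha)) hb
  rw [setIntegral_congr_ae (hB b hb) (h.mono fun x hx _ => hx), setIntegral_indicator (hM a ha),
    setIntegral_const, integral_indicator (hM a ha)] at h2
  rw [Set.inter_comm, ← h2, smul_eq_mul]

/-- To identify a conditional expectation given `M ⊔ B`, it suffices to compare integrals over
the generating π-system of intersections `a ∩ b`. -/
lemma ae_eq_condExp_sup [IsProbabilityMeasure μ] {M B : MeasurableSpace Ω}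
    (hM : M ≤ m) (hB : B ≤ m) {f g : Ω → ℝ} (hf : Integrable f μ) (hg : Integrable g μ)
    (hgm : StronglyMeasurable[M ⊔ B] g)
    (h : ∀ a b, MeasurableSet[M] a → MeasurableSet[B] b →
      ∫ x in a ∩ b, g x ∂μ = ∫ x in a ∩ b, f x ∂μ) :
    g =ᵐ[μ] μ[f | M ⊔ B] := by
  have hMB : M ⊔ B ≤ m := sup_le hM hB
  refine ae_eq_condExp_of_forall_setIntegral_eq hMB hf (fun s _ _ => hg.integrableOn) ?_
    hgm.aestronglyMeasurable
  have hgen : M ⊔ B = MeasurableSpace.generateFrom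
      {s | ∃ a b, MeasurableSet[M] a ∧ MeasurableSet[B] b ∧ s = a ∩ b} := by
    apply le_antisymm
    · refine sup_le (fun a ha => ?_) (fun b hb => ?_)
      · exact MeasurableSpace.measurableSet_generateFrom
          ⟨a, Set.univ, ha, MeasurableSet.univ, by simp⟩
      · exact MeasurableSpace.measurableSet_generateFrom
          ⟨Set.univ, b, MeasurableSet.univ, hb, by simp⟩
    · refine MeasurableSpace.generateFrom_le ?_
      rintro _ ⟨a, b, ha, hb, rfl⟩
      exact MeasurableSet.inter ((le_sup_left : M ≤ M ⊔ B) a ha)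
        ((le_sup_right : B ≤ M ⊔ B) b hb)
  have hpi : IsPiSystem {s | ∃ a b, MeasurableSet[M] a ∧ MeasurableSet[B] b ∧ s = a ∩ b} := by
    rintro _ ⟨a, b, ha, hb, rfl⟩ _ ⟨a', b', ha', hb', rfl⟩ _
    exact ⟨a ∩ a', b ∩ b', ha.inter ha', hb.inter hb', Set.inter_inter_inter_comm ..⟩
  have huniv : ∫ x, g x ∂μ = ∫ x, f x ∂μ := by
    simpa using h Set.univ Set.univ MeasurableSet.univ MeasurableSet.univ
  intro s hs _
  induction s, hs using MeasurableSpace.induction_on_inter hgen hpi with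
  | empty => simp
  | basic t ht =>
    obtain ⟨a, b, ha, hb, rfl⟩ := ht
    exact h a b ha hb
  | compl t ht ih =>
    rw [setIntegral_compl (hMB t ht) hg, setIntegral_compl (hMB t ht) hf, huniv,
      ih (measure_lt_top _ _)]
  | iUnion u hd hu ih =>
    rw [integral_iUnion (fun i => hMB _ (hu i)) hd hg.integrableOn,
      integral_iUnion (fun i => hMB _ (hu i)) hd hf.integrableOn]
    exact tsum_congr fun i => ih i (measure_lt_top _ _)

lemma condExp_sup_of_indep [IsProbabilityMeasure μ] {A M B : MeasurableSpace Ω}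
    (hA : A ≤ M) (hM : M ≤ m) (hB : B ≤ m) (hind : Indep M B μ) {S : Set Ω}
    (hS : MeasurableSet[M] S) :
    μ[ind S | A] =ᵐ[μ] μ[ind S | A ⊔ B] := by
  have hSi : Integrable (ind S) μ := integrable_ind (hM S hS)
  refine ae_eq_condExp_sup (hA.trans hM) hB hSi integrable_condExp
    (stronglyMeasurable_condExp.mono le_sup_left) fun a b ha hb => ?_
  rw [setIntegral_inter_of_indep hM hB hind (stronglyMeasurable_condExp.mono hA)
      integrable_condExp (hA a ha) hb,
    setIntegral_inter_of_indep hM hB hind (stronglyMeasurable_const.indicator hS) hSi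
      (hA a ha) hb,
    setIntegral_condExp (hA.trans hM) hSi ha]

lemma condExp_eq_of_mem_sup [IsProbabilityMeasure μ] {A M B : MeasurableSpace Ω}
    (hA : A ≤ M) (hM : M ≤ m) (hB : B ≤ m) (hind : Indep M B μ) {D : Set Ω}
    (hD : MeasurableSet[A ⊔ B] D) :
    μ[ind D | A] =ᵐ[μ] μ[ind D | M] := by
  have hAm := hA.trans hM
  have hAB : A ⊔ B ≤ m := sup_le hAm hB
  have hDm := hAB D hD
  refine ae_eq_condExp_of_forall_setIntegral_eq hM (integrable_ind hDm)
    (fun s _ _ => integrable_condExp.integrableOn) (fun s hs _ => ?_)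
    (stronglyMeasurable_condExp.mono hA).aestronglyMeasurable
  have hsm := hM s hs
  calc ∫ x in s, (μ[ind D | A]) x ∂μ = ∫ x in D, (μ[ind s | A]) x ∂μ :=
        setIntegral_condExp_comm hAm hsm hDm
    _ = ∫ x in D, (μ[ind s | A ⊔ B]) x ∂μ :=
        setIntegral_congr_ae hDm
          ((condExp_sup_of_indep hA hM hB hind hs).mono fun x hx _ => hx)
    _ = ∫ x in D, ind s x ∂μ := setIntegral_condExp hAB (integrable_ind hsm) hD
    _ = ∫ x in s, ind D x ∂μ := by
        rw [setIntegral_indicator hsm, setIntegral_indicator hDm, Set.inter_comm]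

lemma measurableSet_of_ae_eq {N : MeasurableSpace Ω}
    (hN : ∀ s : Set Ω, μ s = 0 → MeasurableSet[N] s) {s t : Set Ω}
    (ht : MeasurableSet[N] t) (h : s =ᵐ[μ] t) : MeasurableSet[N] s := by
  obtain ⟨h1, h2⟩ := ae_eq_set.1 h
  have e : s = (t \ (t \ s)) ∪ (s \ t) := by ext x; simp; tauto
  rw [e]
  exact (ht.diff (hN _ h2)).union (hN _ h1)

lemma measurable_of_ae_eq {N : MeasurableSpace Ω}
    (hN : ∀ s : Set Ω, μ s = 0 → MeasurableSet[N] s) {f g : Ω → ℝ}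
    (hg : Measurable[N] g) (h : f =ᵐ[μ] g) : Measurable[N] f := by
  intro U hU
  refine measurableSet_of_ae_eq hN (hg hU) ?_
  filter_upwards [h] with x hx
  change (f x ∈ U) = (g x ∈ U)
  rw [hx]

/-- If each `𝓐 i ≤ M` contains the null sets and `B` is independent of `M`, then joining with `B`
commutes with the infimum of the `𝓐 i`. -/
lemma iInf_sup_le_of_indep [IsProbabilityMeasure μ] {ι : Type*} [Nonempty ι]
    {𝓐 : ι → MeasurableSpace Ω} {M B : MeasurableSpace Ω}
    (hA : ∀ i, 𝓐 i ≤ M) (hM : M ≤ m) (hB : B ≤ m) (hind : Indep M B μ)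
    (hnull : ∀ i, ∀ s : Set Ω, μ s = 0 → MeasurableSet[𝓐 i] s) :
    ⨅ i, (𝓐 i ⊔ B) ≤ (⨅ i, 𝓐 i) ⊔ B := by
  intro C hC
  rw [MeasurableSpace.measurableSet_iInf] at hC
  obtain ⟨i₀⟩ := ‹Nonempty ι›
  set A₀ := ⨅ i, 𝓐 i with hA₀
  have hA₀M : A₀ ≤ M := (iInf_le _ i₀).trans (hA i₀)
  have hA₀m : A₀ ≤ m := hA₀M.trans hM
  have hNm : A₀ ⊔ B ≤ m := sup_le hA₀m hB
  have hnull₀ : ∀ s : Set Ω, μ s = 0 → MeasurableSet[A₀] s := fun s hs =>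
    MeasurableSpace.measurableSet_iInf.2 fun i => hnull i s hs
  have hCMB : MeasurableSet[M ⊔ B] C := (sup_le_sup_right (hA i₀) B) C (hC i₀)
  have hCm : MeasurableSet[m] C := sup_le hM hB C hCMB
  have hstep : ∀ b, MeasurableSet[B] b → μ[ind (b ∩ C) | M] =ᵐ[μ] μ[ind (b ∩ C) | A₀] := by
    intro b hb
    have hmeas : Measurable[A₀] (μ[ind (b ∩ C) | M]) := by
      intro U hU
      refine MeasurableSpace.measurableSet_iInf.2 fun i => ?_
      have hD : MeasurableSet[𝓐 i ⊔ B] (b ∩ C) :=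
        MeasurableSet.inter ((le_sup_right : B ≤ 𝓐 i ⊔ B) b hb) (hC i)
      exact measurable_of_ae_eq (hnull i) stronglyMeasurable_condExp.measurable
        (condExp_eq_of_mem_sup (hA i) hM hB hind hD).symm hU
    have h1 := condExp_of_stronglyMeasurable (μ := μ) hA₀m hmeas.stronglyMeasurable
      integrable_condExp
    have h2 := condExp_condExp_of_le (μ := μ) (f := ind (b ∩ C)) hA₀M hM
    rw [h1] at h2
    exact h2
  have hfin : μ[ind C | A₀ ⊔ B] =ᵐ[μ] μ[ind C | M ⊔ B] := by
    refine ae_eq_condExp_sup hM hB (integrable_ind hCm) integrable_condExp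
      (stronglyMeasurable_condExp.mono (sup_le_sup_right hA₀M B)) fun a b ha hb => ?_
    have ham := hM a ha
    have hbm := hB b hb
    have hbC := hbm.inter hCm
    have e : ind (b ∩ C) = b.indicator (ind C) := by
      rw [ind, ind, Set.indicator_indicator]
    have hpull : μ[ind (b ∩ C) | A₀ ⊔ B] =ᵐ[μ] b.indicator (μ[ind C | A₀ ⊔ B]) := by
      rw [e]
      exact condExp_indicator (integrable_ind hCm) ((le_sup_right : B ≤ A₀ ⊔ B) b hb)
    calc ∫ x in a ∩ b, (μ[ind C | A₀ ⊔ B]) x ∂μ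
        = ∫ x in a, b.indicator (μ[ind C | A₀ ⊔ B]) x ∂μ := (setIntegral_indicator hbm).symm
      _ = ∫ x in a, (μ[ind (b ∩ C) | A₀ ⊔ B]) x ∂μ :=
          setIntegral_congr_ae ham (hpull.mono fun x hx _ => hx.symm)
      _ = ∫ x in b ∩ C, (μ[ind a | A₀ ⊔ B]) x ∂μ := setIntegral_condExp_comm hNm ham hbC
      _ = ∫ x in b ∩ C, (μ[ind a | A₀]) x ∂μ :=
          setIntegral_congr_ae hbC
            ((condExp_sup_of_indep hA₀M hM hB hind ha).mono fun x hx _ => hx.symm)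
      _ = ∫ x in a, (μ[ind (b ∩ C) | A₀]) x ∂μ := setIntegral_condExp_comm hA₀m hbC ham
      _ = ∫ x in a, (μ[ind (b ∩ C) | M]) x ∂μ :=
          setIntegral_congr_ae ham ((hstep b hb).mono fun x hx _ => hx.symm)
      _ = ∫ x in a, ind (b ∩ C) x ∂μ := setIntegral_condExp hM (integrable_ind hbC) ha
      _ = ∫ x in a ∩ b, ind C x ∂μ := by rw [e, setIntegral_indicator hbm]
  rw [condExp_of_stronglyMeasurable (sup_le hM hB) (stronglyMeasurable_const.indicator hCMB)
    (integrable_ind hCm)] at hfin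
  have hmeas : Measurable[A₀ ⊔ B] (ind C) :=
    measurable_of_ae_eq (fun s hs => (le_sup_left : A₀ ≤ A₀ ⊔ B) s (hnull₀ s hs))
      stronglyMeasurable_condExp.measurable hfin.symm
  have hpre : C = ind C ⁻¹' {1} := by
    ext x; by_cases hx : x ∈ C <;> simp [ind, hx]
  rw [hpre]
  exact hmeas (measurableSet_singleton 1)

end Aux

/-- **Lemma A.4 (i).** If `F` and `H` are right-continuous filtrations on a complete
probability space, each containing all `μ`-null sets, and `F` and `H` are independent,
then the filtration `G = F ∨ H` is right-continuous. -/
theorem rightContinuous_sup_of_indep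
    {Ω : Type*} {m : MeasurableSpace Ω} {μ : Measure Ω}
    [IsProbabilityMeasure μ] [μ.IsComplete]
    (F H : Filtration ℝ≥0 m)
    (hF_rc : ∀ t : ℝ≥0, ⨅ s ∈ Set.Ioi t, F s = F t)
    (hH_rc : ∀ t : ℝ≥0, ⨅ s ∈ Set.Ioi t, H s = H t)
    (hF_null : ∀ s : Set Ω, μ s = 0 → ∀ t : ℝ≥0, MeasurableSet[F t] s)
    (hH_null : ∀ s : Set Ω, μ s = 0 → ∀ t : ℝ≥0, MeasurableSet[H t] s)
    (h_indep : Indep (⨆ t : ℝ≥0, F t) (⨆ t : ℝ≥0, H t) μ) :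
    ∀ t : ℝ≥0, ⨅ s ∈ Set.Ioi t, (F s ⊔ H s) = F t ⊔ H t := by
  intro t
  apply le_antisymm
  · have hFt := hF_rc t
    have hHt := hH_rc t
    rw [iInf_subtype'] at hFt hHt ⊢
    have hFm : ⨆ t : ℝ≥0, F t ≤ m := iSup_le F.le
    have hHm : ⨆ t : ℝ≥0, H t ≤ m := iSup_le H.le
    have : Nonempty (Set.Ioi t) := ⟨⟨t + 1, by simp⟩⟩
    have h1 : ∀ r : Set.Ioi t, ⨅ s : Set.Ioi t, (F s ⊔ H r) ≤ F t ⊔ H r := fun r => by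
      rw [← hFt]
      exact iInf_sup_le_of_indep (fun i => le_iSup F.seq i.1) hFm (H.le r)
        (indep_of_indep_of_le_right h_indep (le_iSup H.seq r.1)) fun i s hs => hF_null s hs i
    have h2 : ⨅ r : Set.Ioi t, (H r ⊔ F t) ≤ H t ⊔ F t := by
      rw [← hHt]
      exact iInf_sup_le_of_indep (fun i => le_iSup H.seq i.1) hHm (F.le t)
        (indep_of_indep_of_le_right h_indep.symm (le_iSup F.seq t)) fun i s hs => hH_null s hs i
    rw [sup_comm (F t)]
    refine le_trans (le_iInf fun r => ?_) h2
    rw [sup_comm]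
    refine le_trans (le_iInf fun s => ?_) (h1 r)
    refine (iInf_le _ (min s r)).trans (sup_le_sup (F.mono ?_) (H.mono ?_))
    · exact_mod_cast min_le_left s r
    · exact_mod_cast min_le_right s r
  · exact le_iInf₂ fun s hs => sup_le_sup (F.mono (le_of_lt hs)) (H.mono (le_of_lt hs))
end

section
/- Let F and H be two right-continuous filtrations on a probability space and assume F and H are independent. Let M be an F-martingale and N an H-martingale. Then for every t the product M_t N_t is integrable, and the pointwise product process M N = (M_t N_t)_{t ≥ 0} is a martingale with respect to the filtration G = F ∨ H defined by G_t = F_t ⊔ H_t. (Lemma A.4 (iii), martingale case.) -/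
open MeasureTheory ProbabilityTheory Filter
open scoped NNReal

/-!
The product formula `E[X Y | m₁ ⊔ m₂] = E[X | m₁] E[Y | m₂]` holds whenever `X` is integrable and
measurable for `mX ⊇ m₁`, `Y` is integrable and measurable for `mY ⊇ m₂`, and `mX`, `mY` are
independent (`condExp_mul_of_indep`). Applied to `X = M_t`, `Y = N_t`, `m₁ = F_s`, `m₂ = H_s` with
`s ≤ t`, it gives the martingale property of `M N`.

The product formula is checked on the π-system of intersections `A ∩ B` with `A ∈ m₁`, `B ∈ m₂`,
which generates `m₁ ⊔ m₂`: by independence `∫_{A ∩ B} X Y = (∫_A X) (∫_B Y)`, and neither factor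
changes when `X` and `Y` are replaced by their conditional expectations. Both sides are integrals
of integrable functions, so the equality extends to all of `m₁ ⊔ m₂` by Dynkin's lemma.
-/

section Aux

variable {Ω : Type*} {m : MeasurableSpace Ω} {μ : Measure Ω}

lemma sup_eq_generateFrom_inter (m₁ m₂ : MeasurableSpace Ω) :
    m₁ ⊔ m₂ = MeasurableSpace.generateFrom
      (Set.image2 (· ∩ ·) {A | MeasurableSet[m₁] A} {B | MeasurableSet[m₂] B}) := by
  apply le_antisymm
  · refine sup_le (fun A hA => ?_) (fun B hB => ?_)
    · exact MeasurableSpace.measurableSet_generateFrom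
        ⟨A, hA, Set.univ, MeasurableSet.univ, Set.inter_univ A⟩
    · exact MeasurableSpace.measurableSet_generateFrom
        ⟨Set.univ, MeasurableSet.univ, B, hB, Set.univ_inter B⟩
  · refine MeasurableSpace.generateFrom_le ?_
    rintro _ ⟨A, hA, B, hB, rfl⟩
    exact MeasurableSet.inter ((le_sup_left : m₁ ≤ m₁ ⊔ m₂) A hA)
      ((le_sup_right : m₂ ≤ m₁ ⊔ m₂) B hB)

lemma isPiSystem_inter (m₁ m₂ : MeasurableSpace Ω) :
    IsPiSystem (Set.image2 (· ∩ ·) {A | MeasurableSet[m₁] A} {B | MeasurableSet[m₂] B}) := by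
  rintro _ ⟨A, hA, B, hB, rfl⟩ _ ⟨A', hA', B', hB', rfl⟩ -
  exact ⟨A ∩ A', MeasurableSet.inter hA hA', B ∩ B', MeasurableSet.inter hB hB',
    Set.inter_inter_inter_comm A A' B B'⟩

/-- Two integrable functions with equal integrals over the sets `A ∩ B`, `A ∈ m₁`, `B ∈ m₂`, have
equal integrals over every set of `m₁ ⊔ m₂`. -/
lemma setIntegral_eq_of_inter {m₁ m₂ : MeasurableSpace Ω} (h₁ : m₁ ≤ m) (h₂ : m₂ ≤ m)
    {f g : Ω → ℝ} (hf : Integrable f μ) (hg : Integrable g μ)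
    (h : ∀ A B, MeasurableSet[m₁] A → MeasurableSet[m₂] B →
      ∫ ω in A ∩ B, f ω ∂μ = ∫ ω in A ∩ B, g ω ∂μ)
    {s : Set Ω} (hs : MeasurableSet[m₁ ⊔ m₂] s) :
    ∫ ω in s, f ω ∂μ = ∫ ω in s, g ω ∂μ := by
  have hle : m₁ ⊔ m₂ ≤ m := sup_le h₁ h₂
  have huniv : ∫ ω, f ω ∂μ = ∫ ω, g ω ∂μ := by
    simpa using h Set.univ Set.univ MeasurableSet.univ MeasurableSet.univ
  refine MeasurableSpace.induction_on_inter (m := m₁ ⊔ m₂)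
    (C := fun s _ => ∫ ω in s, f ω ∂μ = ∫ ω in s, g ω ∂μ)
    (sup_eq_generateFrom_inter m₁ m₂) (isPiSystem_inter m₁ m₂) (by simp) ?_ ?_ ?_ s hs
  · rintro _ ⟨A, hA, B, hB, rfl⟩
    exact h A B hA hB
  · intro t ht iht
    rw [setIntegral_compl (hle t ht) hf, setIntegral_compl (hle t ht) hg, huniv, iht]
  · intro t hd ht iht
    rw [integral_iUnion (fun i => hle _ (ht i)) hd hf.integrableOn,
      integral_iUnion (fun i => hle _ (ht i)) hd hg.integrableOn]
    simp only [iht]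

lemma indepFun_of_indep {mX mY : MeasurableSpace Ω} (hind : Indep mX mY μ) {X Y : Ω → ℝ}
    (hX : StronglyMeasurable[mX] X) (hY : StronglyMeasurable[mY] Y) : IndepFun X Y μ :=
  indep_of_indep_of_le_left (indep_of_indep_of_le_right hind hY.measurable.comap_le)
    hX.measurable.comap_le

lemma setIntegral_inter_mul_of_indep {mX mY : MeasurableSpace Ω} (hmX : mX ≤ m) (hmY : mY ≤ m)
    (hind : Indep mX mY μ) {X Y : Ω → ℝ}
    (hX : StronglyMeasurable[mX] X) (hY : StronglyMeasurable[mY] Y)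
    {A B : Set Ω} (hA : MeasurableSet[mX] A) (hB : MeasurableSet[mY] B) :
    ∫ ω in A ∩ B, X ω * Y ω ∂μ = (∫ ω in A, X ω ∂μ) * ∫ ω in B, Y ω ∂μ := by
  rw [← integral_indicator (hmX A hA), ← integral_indicator (hmY B hB),
    ← integral_indicator ((hmX A hA).inter (hmY B hB))]
  simp only [Set.inter_indicator_mul]
  exact (indepFun_of_indep hind (hX.indicator hA)
    (hY.indicator hB)).integral_fun_mul_eq_mul_integral
      ((hX.indicator hA).mono hmX).aestronglyMeasurable
      ((hY.indicator hB).mono hmY).aestronglyMeasurable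

/-- If `X` and `Y` are measurable for independent σ-algebras `mX` and `mY`, conditioning `X * Y` on
`m₁ ⊔ m₂` with `m₁ ≤ mX`, `m₂ ≤ mY` amounts to conditioning each factor separately. -/
lemma condExp_mul_of_indep [IsFiniteMeasure μ] {m₁ m₂ mX mY : MeasurableSpace Ω}
    (h₁ : m₁ ≤ mX) (h₂ : m₂ ≤ mY) (hmX : mX ≤ m) (hmY : mY ≤ m)
    (hind : Indep mX mY μ) {X Y : Ω → ℝ}
    (hX : StronglyMeasurable[mX] X) (hY : StronglyMeasurable[mY] Y)
    (hXi : Integrable X μ) (hYi : Integrable Y μ) :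
    μ[fun ω => X ω * Y ω | m₁ ⊔ m₂] =ᵐ[μ] fun ω => (μ[X | m₁]) ω * (μ[Y | m₂]) ω := by
  have hle : m₁ ⊔ m₂ ≤ m := sup_le (h₁.trans hmX) (h₂.trans hmY)
  have hX' : StronglyMeasurable[m₁] (μ[X | m₁]) := stronglyMeasurable_condExp
  have hY' : StronglyMeasurable[m₂] (μ[Y | m₂]) := stronglyMeasurable_condExp
  have hXY : Integrable (fun ω => X ω * Y ω) μ :=
    (indepFun_of_indep hind hX hY).integrable_mul hXi hYi
  have hXY' : Integrable (fun ω => (μ[X | m₁]) ω * (μ[Y | m₂]) ω) μ :=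
    (indepFun_of_indep hind (hX'.mono h₁) (hY'.mono h₂)).integrable_mul
      integrable_condExp integrable_condExp
  symm
  refine ae_eq_condExp_of_forall_setIntegral_eq hle hXY (fun s _ _ => hXY'.integrableOn)
    (fun s hs _ => ?_) ?_
  · refine setIntegral_eq_of_inter (h₁.trans hmX) (h₂.trans hmY) hXY' hXY
      (fun A B hA hB => ?_) hs
    rw [setIntegral_inter_mul_of_indep hmX hmY hind hX hY (h₁ A hA) (h₂ B hB),
      setIntegral_inter_mul_of_indep hmX hmY hind (hX'.mono h₁) (hY'.mono h₂) (h₁ A hA) (h₂ B hB),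
      setIntegral_condExp (h₁.trans hmX) hXi hA, setIntegral_condExp (h₂.trans hmY) hYi hB]
  · exact ((hX'.mono le_sup_left).mul (hY'.mono le_sup_right)).aestronglyMeasurable

end Aux

/-- **Lemma A.4 (iii), martingale case.** If `F` and `H` are independent right-continuous
filtrations, `M` is an `F`-martingale and `N` is an `H`-martingale, then `M_t N_t` is
integrable for every `t` and the product process `M N` is a martingale with respect to
`G = F ∨ H`. -/
theorem martingale_mul_of_indep
    {Ω : Type*} {m : MeasurableSpace Ω} {μ : Measure Ω} [IsProbabilityMeasure μ]
    (F H : Filtration ℝ≥0 m)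
    (hF_rc : ∀ t : ℝ≥0, ⨅ s ∈ Set.Ioi t, F s = F t)
    (hH_rc : ∀ t : ℝ≥0, ⨅ s ∈ Set.Ioi t, H s = H t)
    (h_indep : Indep (⨆ t : ℝ≥0, F t) (⨆ t : ℝ≥0, H t) μ)
    (M N : ℝ≥0 → Ω → ℝ) (hM : Martingale M F μ) (hN : Martingale N H μ) :
    (∀ t : ℝ≥0, Integrable (fun ω => M t ω * N t ω) μ) ∧
      Martingale (fun t ω => M t ω * N t ω) (F ⊔ H) μ := by

  have hind : ∀ t, Indep (F t) (H t) μ := fun t =>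
    indep_of_indep_of_le_left (indep_of_indep_of_le_right h_indep (le_iSup (fun t => H t) t))
      (le_iSup (fun t => F t) t)
  refine ⟨fun t => ?_, fun t => ?_, fun s t hst => ?_⟩
  · exact (indepFun_of_indep (hind t) (hM.stronglyMeasurable t)
      (hN.stronglyMeasurable t)).integrable_mul (hM.integrable t) (hN.integrable t)
  · exact ((hM.stronglyMeasurable t).mono le_sup_left).mul
      ((hN.stronglyMeasurable t).mono le_sup_right)
  · have key := condExp_mul_of_indep (F.mono hst) (H.mono hst) (F.le t) (H.le t) (hind t)
      (hM.stronglyMeasurable t) (hN.stronglyMeasurable t) (hM.integrable t) (hN.integrable t)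
    filter_upwards [key, hM.condExp_ae_eq hst, hN.condExp_ae_eq hst] with ω hω hMω hNω
    rw [← hMω, ← hNω]
    exact hω
end

section
/- Let F^1, …, F^n be right-continuous filtrations on a complete probability space, each containing all μ-null sets, and assume they are jointly independent, i.e., the family of σ-algebras (F^1_∞, …, F^n_∞) with F^i_∞ := ⨆_{t ≥ 0} F^i_t is an independent family under μ. Then the filtration G defined by G_t := ⨆_{i=1}^n F^i_t is right-continuous: for every t ≥ 0, ⨅_{s > t} G_s = G_t. (Theorem 4.1 (i).) -/
/-!
Write `G t = ⨆ i, F i t` and `G t+ = ⨅ s > t, G s`; the point is `G t+ ≤ G t`. For `B i ∈ F i ∞`,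
independence gives `E[1_{⋂ B i} | G s] = ∏ i, E[1_{B i} | F i s]` for every `s`
(`condExp_indicator_iInter`). As `s ↓ t`, each factor converges in `L¹` to `E[1_{B i} | F i t]` by
the backward martingale theorem and the right-continuity of `F i`
(`tendsto_integral_condExp_sub`), and the factors are bounded by `1`, so the products converge in
`L¹` to `E[1_{⋂ B i} | G t]`. Integrating over `A ∈ G t+` gives
`μ (A ∩ ⋂ B i) = ∫_A E[1_{⋂ B i} | G t]` (`setIntegral_condExp_indicator_eq`).

By self-adjointness of the conditional expectation, the right-hand side is
`∫_{⋂ B i} E[1_A | G t]`. Hence `1_A` and `E[1_A | G t]` have the same integral over a π-system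
generating `G ∞`, for which both are measurable, so they agree almost everywhere. Since `G t`
contains the null sets, `A ∈ G t`.
-/

open MeasureTheory ProbabilityTheory Filter
open scoped NNReal

/-- A σ-algebra containing the null sets is closed under null modifications of its sets. The null
sets may be non-measurable a priori: `μ` is applied as an outer measure. -/
theorem measurableSet_of_ae_eq_s5 {Ω : Type*} {m' m : MeasurableSpace Ω} {μ : Measure[m] Ω}
    (hnull : ∀ s, μ s = 0 → MeasurableSet[m'] s) {A B : Set Ω} (hAB : A =ᵐ[μ] B)
    (hB : MeasurableSet[m'] B) : MeasurableSet[m'] A := by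
  obtain ⟨h1, h2⟩ := ae_eq_set.1 hAB
  have : A = (B \ (B \ A)) ∪ (A \ B) := by ext x; simp; tauto
  rw [this]
  exact (hB.diff (hnull _ h2)).union (hnull _ h1)

theorem measurable_of_ae_eq_s5 {Ω : Type*} {m' m : MeasurableSpace Ω} {μ : Measure[m] Ω}
    (hnull : ∀ s, μ s = 0 → MeasurableSet[m'] s) {f g : Ω → ℝ} (hfg : f =ᵐ[μ] g)
    (hg : Measurable[m'] g) : Measurable[m'] f := by
  intro S hS
  refine measurableSet_of_ae_eq_s5 hnull ?_ (hg hS)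
  filter_upwards [hfg] with x hx
  exact congrArg S hx

/-- Projections onto a decreasing family of closed subspaces converge strongly to the projection
onto the intersection: pass to orthogonal complements, which increase. -/
theorem starProjection_tendsto_iInf {E ι : Type*} [NormedAddCommGroup E] [InnerProductSpace ℝ E]
    [CompleteSpace E] [Preorder ι] (U : ι → Submodule ℝ E) [∀ i, (U i).HasOrthogonalProjection]
    (V : Submodule ℝ E) [V.HasOrthogonalProjection] (hU : Antitone U) (hV : ⨅ i, U i = V) (x : E) :
    Tendsto (fun i => (U i).starProjection x) atTop (nhds (V.starProjection x)) := by
  have key := Submodule.starProjection_tendsto_closure_iSup (fun i => (U i)ᗮ)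
    (fun i j hij => Submodule.orthogonal_le (hU hij)) x
  have hW : (⨆ i, (U i)ᗮ).topologicalClosure = Vᗮ := by
    rw [← Submodule.orthogonal_orthogonal_eq_closure, ← Submodule.iInf_orthogonal, ← hV]
    simp only [Submodule.orthogonal_orthogonal]
  have hp : (⨆ i, (U i)ᗮ).topologicalClosure.starProjection x = Vᗮ.starProjection x := by
    congr!
  rw [hp] at key
  simp only [Submodule.starProjection_orthogonal] at key
  simpa using key.const_sub x

/-- Lévy's downward theorem in `L¹`, for square-integrable `f`, along an arbitrary (possibly
uncountable) decreasing family of σ-algebras. On `L²` the conditional expectations are orthogonal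
projections. That the null sets lie in each `m i` ensures that a class in `L²` which is a.e.
measurable for every `m i` is a.e. measurable for their infimum. -/
theorem tendsto_integral_condExp_sub {Ω ι : Type*} (mi : MeasurableSpace Ω)
    {m0 : MeasurableSpace Ω} {μ : Measure Ω} [IsProbabilityMeasure μ] [Preorder ι]
    (m : ι → MeasurableSpace Ω) (hm : ∀ i, m i ≤ m0) (hmi : mi ≤ m0)
    (hanti : Antitone m)
    (hinf : ⨅ i, m i = mi) (hnull : ∀ i s, μ s = 0 → MeasurableSet[m i] s) {f : Ω → ℝ}
    (hf : MemLp f 2 μ) :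
    Tendsto (fun i => ∫ ω, |(μ[f | m i]) ω - (μ[f | mi]) ω| ∂μ) atTop (nhds 0) := by
  have : ∀ i, Fact (m i ≤ m0) := fun i => ⟨hm i⟩
  have : Fact (mi ≤ m0) := ⟨hmi⟩
  have hle : ∀ i, mi ≤ m i := fun i => hinf ▸ iInf_le _ i
  have key := starProjection_tendsto_iInf (fun i => lpMeas ℝ ℝ (m i) 2 μ) (lpMeas ℝ ℝ mi 2 μ)
    (fun i j hij g hg => mem_lpMeas_iff_aestronglyMeasurable.2
      ((mem_lpMeas_iff_aestronglyMeasurable.1 hg).mono (hanti hij)))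
    (by
      ext g
      simp only [Submodule.mem_iInf, mem_lpMeas_iff_aestronglyMeasurable]
      refine ⟨fun h => ?_, fun h i => h.mono (hle i)⟩
      have : Measurable[mi] g := by
        intro S hS
        rw [← hinf, MeasurableSpace.measurableSet_iInf]
        intro i
        exact measurable_of_ae_eq_s5 (hnull i) (h i).ae_eq_mk
          (h i).stronglyMeasurable_mk.measurable hS
      exact this.stronglyMeasurable.aestronglyMeasurable) hf.toLp
  rw [Lp.tendsto_Lp_iff_tendsto_eLpNorm'] at key
  have h1 : ∀ i, ∫ ω, |(μ[f | m i]) ω - (μ[f | mi]) ω| ∂μ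
      = (eLpNorm (μ[f | m i] - μ[f | mi]) 1 μ).toReal := by
    intro i
    rw [eLpNorm_one_eq_lintegral_enorm, ← integral_norm_eq_lintegral_enorm
      (integrable_condExp.sub integrable_condExp).1]
    rfl
  simp only [h1]
  rw [← ENNReal.toReal_zero]
  refine (ENNReal.tendsto_toReal ENNReal.zero_ne_top).comp ?_
  refine tendsto_of_tendsto_of_tendsto_of_le_of_le tendsto_const_nhds key (fun _ => zero_le) ?_
  intro i
  refine (eLpNorm_le_eLpNorm_of_exponent_le one_le_two
    (integrable_condExp.sub integrable_condExp).1).trans (le_of_eq (eLpNorm_congr_ae ?_))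
  exact ((hf.condExpL2_ae_eq_condExp (𝕜 := ℝ) (hm i)).sub
    (hf.condExpL2_ae_eq_condExp (𝕜 := ℝ) hmi)).symm

/-- π-λ argument: the sets `⋂ i, B i` with `B i ∈ m i` suffice to compare integrals over all sets
of `⨆ i, m i`. -/
theorem setIntegral_eq_of_iInter {Ω ι : Type*} [Fintype ι] {m0 : MeasurableSpace Ω}
    {μ : Measure Ω} (m : ι → MeasurableSpace Ω) (hm : ∀ i, m i ≤ m0) {f g : Ω → ℝ}
    (hf : Integrable f μ) (hg : Integrable g μ)
    (h : ∀ B : ι → Set Ω, (∀ i, MeasurableSet[m i] (B i)) →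
      ∫ ω in ⋂ i, B i, f ω ∂μ = ∫ ω in ⋂ i, B i, g ω ∂μ)
    {C : Set Ω} (hC : MeasurableSet[⨆ i, m i] C) :
    ∫ ω in C, f ω ∂μ = ∫ ω in C, g ω ∂μ := by
  classical
  have hle : (⨆ i, m i) ≤ m0 := iSup_le hm
  have huniv : ∫ ω, f ω ∂μ = ∫ ω, g ω ∂μ := by
    simpa using h (fun _ => Set.univ) (fun _ => MeasurableSet.univ)
  have hgen := generateFrom_piiUnionInter_measurableSet m Set.univ
  simp only [Set.mem_univ, iSup_pos] at hgen
  induction C, hC using MeasurableSpace.induction_on_inter hgen.symm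
    (isPiSystem_piiUnionInter _ (fun i => @MeasurableSpace.isPiSystem_measurableSet Ω (m i)) _) with
  | empty => simp
  | basic t ht =>
    obtain ⟨J, -, B, hB, rfl⟩ := ht
    have := h (fun i => if i ∈ J then B i else Set.univ) (fun i => by
      split_ifs with hi
      · exact hB i hi
      · exact MeasurableSet.univ)
    convert this using 3 <;>
    · ext; simp
  | compl t ht ih =>
    rw [setIntegral_compl (hle _ ht) hf, setIntegral_compl (hle _ ht) hg, ih, huniv]
  | iUnion A hd hA ih =>
    rw [integral_iUnion (fun i => hle _ (hA i)) hd hf.integrableOn,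
      integral_iUnion (fun i => hle _ (hA i)) hd hg.integrableOn]
    simp only [ih]

theorem abs_prod_sub_prod_le {ι : Type*} (s : Finset ι) (a b : ι → ℝ)
    (ha : ∀ i ∈ s, |a i| ≤ 1) (hb : ∀ i ∈ s, |b i| ≤ 1) :
    |∏ i ∈ s, a i - ∏ i ∈ s, b i| ≤ ∑ i ∈ s, |a i - b i| := by
  classical
  induction s using Finset.induction_on with
  | empty => simp
  | insert j s hj ih =>
    rw [Finset.prod_insert hj, Finset.prod_insert hj, Finset.sum_insert hj]
    have hA : |∏ i ∈ s, a i| ≤ 1 := by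
      rw [Finset.abs_prod]
      exact Finset.prod_le_one (fun _ _ => abs_nonneg _)
        (fun i hi => ha i (Finset.mem_insert_of_mem hi))
    have hI := ih (fun i hi => ha i (Finset.mem_insert_of_mem hi))
      (fun i hi => hb i (Finset.mem_insert_of_mem hi))
    have hbj := hb j (Finset.mem_insert_self _ _)
    calc |a j * ∏ i ∈ s, a i - b j * ∏ i ∈ s, b i|
        = |(a j - b j) * ∏ i ∈ s, a i + b j * (∏ i ∈ s, a i - ∏ i ∈ s, b i)| := by ring_nf
      _ ≤ |a j - b j| * |∏ i ∈ s, a i| + |b j| * |∏ i ∈ s, a i - ∏ i ∈ s, b i| := by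
        rw [← abs_mul, ← abs_mul]; exact abs_add_le _ _
      _ ≤ |a j - b j| * 1 + 1 * ∑ i ∈ s, |a i - b i| := by gcongr
      _ = _ := by ring

theorem abs_condExp_indicator_le {Ω : Type*} (m' : MeasurableSpace Ω)
    {m0 : MeasurableSpace Ω} {μ : Measure Ω} (B : Set Ω) :
    ∀ᵐ ω ∂μ, |(μ[B.indicator (1 : Ω → ℝ) | m']) ω| ≤ 1 := by
  refine ae_bdd_abs_condExp_of_ae_bdd_abs (.of_forall fun ω => ?_)
  by_cases h : ω ∈ B <;> simp [h]

theorem integrable_prod_condExp {Ω ι : Type*} [Fintype ι] {m0 : MeasurableSpace Ω}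
    {μ : Measure Ω} [IsProbabilityMeasure μ] (m : ι → MeasurableSpace Ω) (B : ι → Set Ω) :
    Integrable (fun ω => ∏ i, (μ[(B i).indicator (1 : Ω → ℝ) | m i]) ω) μ := by
  refine Integrable.of_bound (C := 1) ?_ ?_
  · exact Finset.aestronglyMeasurable_fun_prod _ fun i _ => integrable_condExp.1
  · filter_upwards [ae_all_iff.2 fun i => abs_condExp_indicator_le (μ := μ) (m i) (B i)] with ω hω
    rw [Real.norm_eq_abs, Finset.abs_prod]
    exact Finset.prod_le_one (fun _ _ => abs_nonneg _) (fun i _ => hω i)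

/-- If `m i ≤ M i` with the `M i` independent, the conditional expectation of a product of
`M i`-measurable indicators given `⨆ i, m i` factorizes as
`∏ i, E[1_{B i} | m i] = E[∏ i, 1_{B i} | ⨆ i, m i]`. -/
theorem condExp_indicator_iInter {Ω ι : Type*} [Fintype ι] {m0 : MeasurableSpace Ω}
    {μ : Measure Ω} [IsProbabilityMeasure μ] (m M : ι → MeasurableSpace Ω)
    (hmM : ∀ i, m i ≤ M i) (hM : ∀ i, M i ≤ m0) (hind : iIndep M μ) (B : ι → Set Ω)
    (hB : ∀ i, MeasurableSet[M i] (B i)) :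
    (fun ω => ∏ i, (μ[(B i).indicator (1 : Ω → ℝ) | m i]) ω)
      =ᵐ[μ] μ[(⋂ i, B i).indicator (1 : Ω → ℝ) | ⨆ i, m i] := by
  have hm : ∀ i, m i ≤ m0 := fun i => (hmM i).trans (hM i)
  have hI : ∀ {S : Set Ω}, MeasurableSet S → Integrable (S.indicator (1 : Ω → ℝ)) μ :=
    fun hS => (integrable_const (1 : ℝ)).indicator hS
  have hBm : MeasurableSet (⋂ i, B i) := MeasurableSet.iInter fun i => hM i _ (hB i)
  refine ae_eq_condExp_of_forall_setIntegral_eq (iSup_le hm) (hI hBm)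
    (fun _ _ _ => (integrable_prod_condExp m B).integrableOn) (fun C hC _ => ?_) ?_
  · refine setIntegral_eq_of_iInter m hm (integrable_prod_condExp m B) (hI hBm) ?_ hC
    intro C hC
    have hC0 : ∀ i, MeasurableSet (C i) := fun i => hm i _ (hC i)
    have hX : ∀ i, StronglyMeasurable[m i]
        ((C i).indicator (μ[(B i).indicator (1 : Ω → ℝ) | m i])) :=
      fun i => stronglyMeasurable_condExp.indicator (hC i)
    have hfun : iIndepFun (fun i => (C i).indicator (μ[(B i).indicator (1 : Ω → ℝ) | m i])) μ := by
      rw [iIndepFun_iff_iIndep]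
      exact iIndep_of_iIndep_of_le hind fun i => (hX i).measurable.comap_le.trans (hmM i)
    have hprod := hfun.integral_fun_prod_eq_prod_integral
      (fun i => ((hX i).mono (hm i)).aestronglyMeasurable)
    calc ∫ ω in ⋂ i, C i, ∏ i, (μ[(B i).indicator (1 : Ω → ℝ) | m i]) ω ∂μ
        = ∫ ω, ∏ i, (C i).indicator (μ[(B i).indicator (1 : Ω → ℝ) | m i]) ω ∂μ := by
          rw [← integral_indicator (MeasurableSet.iInter hC0)]
          congr 1 with ω
          by_cases h : ω ∈ ⋂ i, C i
          · rw [Set.indicator_of_mem h]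
            exact Finset.prod_congr rfl fun i _ =>
              (Set.indicator_of_mem (Set.mem_iInter.1 h i) _).symm
          · rw [Set.indicator_of_notMem h]
            obtain ⟨i, hi⟩ := not_forall.1 (mt Set.mem_iInter.2 h)
            exact (Finset.prod_eq_zero (Finset.mem_univ i) (Set.indicator_of_notMem hi _)).symm
      _ = ∏ i, ∫ ω in C i, (μ[(B i).indicator (1 : Ω → ℝ) | m i]) ω ∂μ := by
          rw [hprod]
          exact Finset.prod_congr rfl fun i _ => integral_indicator (hC0 i)
      _ = ∏ i, μ.real (C i ∩ B i) := by
          refine Finset.prod_congr rfl fun i _ => ?_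
          rw [setIntegral_condExp (hm i) (hI (hM i _ (hB i))) (hC i),
            integral_indicator_one (hM i _ (hB i)), measureReal_restrict_apply (hM i _ (hB i)),
            Set.inter_comm]
      _ = μ.real (⋂ i, C i ∩ B i) := by
          simp only [measureReal_def]
          rw [hind.meas_iInter fun i => (hmM i _ (hC i)).inter (hB i), ENNReal.toReal_prod]
      _ = ∫ ω in ⋂ i, C i, (⋂ i, B i).indicator (1 : Ω → ℝ) ω ∂μ := by
          rw [integral_indicator_one hBm, measureReal_restrict_apply hBm, Set.iInter_inter_distrib,
            Set.inter_comm]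
  · refine StronglyMeasurable.aestronglyMeasurable ?_
    exact Finset.stronglyMeasurable_fun_prod _ fun i _ =>
      stronglyMeasurable_condExp.mono (le_iSup m i)

/-- Self-adjointness of the conditional expectation, on indicators. -/
theorem setIntegral_condExp_indicator_comm {Ω : Type*} {m' m0 : MeasurableSpace Ω}
    {μ : Measure Ω} [IsProbabilityMeasure μ] (hm' : m' ≤ m0) {A B : Set Ω}
    (hA : MeasurableSet A) (hB : MeasurableSet B) :
    ∫ ω in A, (μ[B.indicator (1 : Ω → ℝ) | m']) ω ∂μ
      = ∫ ω in B, (μ[A.indicator (1 : Ω → ℝ) | m']) ω ∂μ := by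
  have key : ∀ {A B : Set Ω}, MeasurableSet A → MeasurableSet B →
      ∫ ω in A, (μ[B.indicator (1 : Ω → ℝ) | m']) ω ∂μ
        = ∫ ω, (μ[B.indicator (1 : Ω → ℝ) | m']) ω * (μ[A.indicator (1 : Ω → ℝ) | m']) ω ∂μ := by
    intro A B hA hB
    have h := condExp_stronglyMeasurable_mul_of_bound hm' (μ := μ)
      (stronglyMeasurable_condExp (f := B.indicator (1 : Ω → ℝ)))
      ((integrable_const (1 : ℝ)).indicator hA) 1 (abs_condExp_indicator_le m' B)
    rw [← integral_indicator hA]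
    refine Eq.trans ?_ ((integral_condExp hm').symm.trans (integral_congr_ae h))
    congr 1 with ω
    by_cases h : ω ∈ A <;> simp [h]
  rw [key hA hB, key hB hA]
  simp only [mul_comm]

/-- Let `m' k` decrease to `m`, coordinatewise inside the independent family `M`. A set `A` lying
in every `⨆ i, m' k i` cannot distinguish `1_{⋂ B i}` from its conditional expectation given
`⨆ i, m i`, although `A` is not assumed to belong to `⨆ i, m i`. -/
theorem setIntegral_condExp_indicator_eq {Ω ι κ : Type*} [Fintype ι] {m0 : MeasurableSpace Ω}
    {μ : Measure Ω} [IsProbabilityMeasure μ] [Preorder κ] [IsDirectedOrder κ] [Nonempty κ]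
    (M m : ι → MeasurableSpace Ω) (m' : κ → ι → MeasurableSpace Ω)
    (hM : ∀ i, M i ≤ m0) (hm'M : ∀ k i, m' k i ≤ M i) (hmM : ∀ i, m i ≤ M i)
    (hanti : ∀ i, Antitone fun k => m' k i) (hinf : ∀ i, ⨅ k, m' k i = m i)
    (hnull : ∀ k i s, μ s = 0 → MeasurableSet[m' k i] s) (hind : iIndep M μ) (B : ι → Set Ω)
    (hB : ∀ i, MeasurableSet[M i] (B i)) {A : Set Ω}
    (hA : ∀ k, MeasurableSet[⨆ i, m' k i] A) :
    ∫ ω in A, (μ[(⋂ i, B i).indicator (1 : Ω → ℝ) | ⨆ i, m i]) ω ∂μ = μ.real (A ∩ ⋂ i, B i) := by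
  have hm' : ∀ k i, m' k i ≤ m0 := fun k i => (hm'M k i).trans (hM i)
  have hBm : MeasurableSet (⋂ i, B i) := MeasurableSet.iInter fun i => hM i _ (hB i)
  have hI : ∀ {S : Set Ω}, MeasurableSet S → Integrable (S.indicator (1 : Ω → ℝ)) μ :=
    fun hS => (integrable_const (1 : ℝ)).indicator hS
  let g : κ → ι → Ω → ℝ := fun k i => μ[(B i).indicator (1 : Ω → ℝ) | m' k i]
  let g₀ : ι → Ω → ℝ := fun i => μ[(B i).indicator (1 : Ω → ℝ) | m i]
  have hg : ∀ k, Integrable (fun ω => ∏ i, g k i ω) μ := fun k => integrable_prod_condExp (m' k) B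
  have hg₀ : Integrable (fun ω => ∏ i, g₀ i ω) μ := integrable_prod_condExp m B
  -- By factorization the integral over `A` does not depend on `k`, since `A ∈ ⨆ i, m' k i`.
  have hconst : ∀ k, ∫ ω in A, ∏ i, g k i ω ∂μ = μ.real (A ∩ ⋂ i, B i) := by
    intro k
    rw [setIntegral_congr_ae (iSup_le (hm' k) _ (hA k))
        ((condExp_indicator_iInter (m' k) M (hm'M k) hM hind B hB).mono fun _ h _ => h),
      setIntegral_condExp (iSup_le (hm' k)) (hI hBm) (hA k), integral_indicator_one hBm,
      measureReal_restrict_apply hBm, Set.inter_comm]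
  have hlim : Tendsto (fun k => ∫ ω in A, ∏ i, g k i ω ∂μ) atTop
      (nhds (∫ ω in A, ∏ i, g₀ i ω ∂μ)) := by
    have hs : Tendsto (fun k => ∑ i, ∫ ω, |g k i ω - g₀ i ω| ∂μ) atTop (nhds 0) := by
      rw [← Finset.sum_const_zero (s := Finset.univ (α := ι))]
      exact tendsto_finsetSum _ fun i _ => tendsto_integral_condExp_sub (m i) (fun k => m' k i)
        (fun k => hm' k i) ((hmM i).trans (hM i)) (hanti i) (hinf i) (fun k => hnull k i)
        ((memLp_const (1 : ℝ)).indicator (hM i _ (hB i)))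
    rw [tendsto_iff_norm_sub_tendsto_zero]
    refine squeeze_zero (fun _ => norm_nonneg _) (fun k => ?_) hs
    rw [← integral_sub (hg k).integrableOn hg₀.integrableOn]
    have hsub : ∀ i, Integrable (fun ω => |g k i ω - g₀ i ω|) μ :=
      fun i => (integrable_condExp.sub integrable_condExp).abs
    calc ‖∫ ω in A, (∏ i, g k i ω - ∏ i, g₀ i ω) ∂μ‖
        ≤ ∫ ω in A, |∏ i, g k i ω - ∏ i, g₀ i ω| ∂μ := norm_integral_le_integral_norm _
      _ ≤ ∫ ω, |∏ i, g k i ω - ∏ i, g₀ i ω| ∂μ :=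
        setIntegral_le_integral ((hg k).sub hg₀).abs (.of_forall fun _ => abs_nonneg _)
      _ ≤ ∫ ω, ∑ i, |g k i ω - g₀ i ω| ∂μ := by
        refine integral_mono_ae ((hg k).sub hg₀).abs (integrable_finsetSum _ fun i _ => hsub i) ?_
        filter_upwards [ae_all_iff.2 fun i => abs_condExp_indicator_le (μ := μ) (m' k i) (B i),
          ae_all_iff.2 fun i => abs_condExp_indicator_le (μ := μ) (m i) (B i)] with ω h h₀
        exact abs_prod_sub_prod_le _ _ _ (fun i _ => h i) (fun i _ => h₀ i)
      _ = _ := integral_finsetSum _ fun i _ => hsub i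
  obtain ⟨k₀⟩ := ‹Nonempty κ›
  have hA0 : MeasurableSet A := iSup_le (hm' k₀) _ (hA k₀)
  simp only [hconst] at hlim
  rw [← setIntegral_congr_ae hA0
    ((condExp_indicator_iInter m M hmM hM hind B hB).mono fun _ h _ => h)]
  exact tendsto_nhds_unique hlim tendsto_const_nhds

/-- **Theorem 4.1 (i).** If `F^1, …, F^n` are jointly independent right-continuous
filtrations on a complete probability space, each containing all `μ`-null sets, then the
filtration `G` defined by `G t := ⨆ i, F i t` is right-continuous. -/
theorem rightContinuous_iSup_of_iIndep
    {Ω : Type*} {m : MeasurableSpace Ω} {μ : Measure Ω}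
    [IsProbabilityMeasure μ] [μ.IsComplete] {n : ℕ}
    (F : Fin n → Filtration ℝ≥0 m)
    (h_rc : ∀ i (t : ℝ≥0), ⨅ s ∈ Set.Ioi t, F i s = F i t)
    (h_null : ∀ i (s : Set Ω), μ s = 0 → ∀ t : ℝ≥0, MeasurableSet[F i t] s)
    (h_indep : iIndep (fun i => ⨆ t : ℝ≥0, F i t) μ) :
    ∀ t : ℝ≥0, ⨅ s ∈ Set.Ioi t, (⨆ i, F i s) = ⨆ i, F i t := by
  intro t
  refine le_antisymm ?_ (le_iInf₂ fun s hs => iSup_mono fun i => (F i).mono (le_of_lt hs))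
  -- For `n = 0` both sides are `⊥`, which need not contain the null sets.
  obtain hn | hn := isEmpty_or_nonempty (Fin n)
  · refine (iInf₂_le (t + 1) (lt_add_one t)).trans ?_
    rw [iSup_of_empty, iSup_of_empty]
  intro A hA
  have hAs : ∀ s > t, MeasurableSet[⨆ i, F i s] A := fun s hs =>
    (iInf₂_le s hs : (⨅ s ∈ Set.Ioi t, ⨆ i, (F i s : MeasurableSpace Ω)) ≤ ⨆ i, F i s) A hA
  let M : Fin n → MeasurableSpace Ω := fun i => ⨆ t : ℝ≥0, F i t
  have hM : ∀ i, M i ≤ m := fun i => iSup_le (F i).le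
  have hFM : ∀ s i, F i s ≤ M i := fun s i => le_iSup (F i) s
  have hG : (⨆ i, F i t) ≤ m := iSup_le fun i => (F i).le t
  have hAM : MeasurableSet[⨆ i, M i] A :=
    iSup_mono (hFM (t + 1)) A (hAs (t + 1) (lt_add_one t))
  have hA0 : MeasurableSet A := iSup_le hM A hAM
  have hI : Integrable (A.indicator (1 : Ω → ℝ)) μ := (integrable_const (1 : ℝ)).indicator hA0
  have hae : A.indicator (1 : Ω → ℝ) =ᵐ[μ] μ[A.indicator (1 : Ω → ℝ) | ⨆ i, F i t] := by
    refine ae_eq_of_forall_setIntegral_eq_of_sigmaFinite' (iSup_le hM)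
      (fun _ _ _ => hI.integrableOn) (fun _ _ _ => integrable_condExp.integrableOn)
      (fun C hC _ => ?_)
      (stronglyMeasurable_one.indicator hAM).aestronglyMeasurable
      (stronglyMeasurable_condExp.mono (iSup_mono (hFM t))).aestronglyMeasurable
    refine setIntegral_eq_of_iInter M hM hI integrable_condExp (fun B hB => ?_) hC
    have hBm : MeasurableSet (⋂ i, B i) := MeasurableSet.iInter fun i => hM i _ (hB i)
    -- The index set `(Set.Ioi t)ᵒᵈ` turns the limit `s ↓ t` into a limit along `atTop`.
    have : Nonempty (Set.Ioi t) := ⟨⟨t + 1, lt_add_one t⟩⟩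
    rw [← setIntegral_condExp_indicator_comm hG hA0 hBm,
      setIntegral_condExp_indicator_eq (κ := (Set.Ioi t)ᵒᵈ) M (fun i => F i t)
        (fun s i => F i (OrderDual.ofDual s).1) hM (fun s i => hFM _ i) (hFM t)
        (fun i s s' h => (F i).mono h) (fun i => ?_) (fun s i N hN => h_null i N hN _) h_indep B hB
        (fun s => hAs _ (OrderDual.ofDual s).2),
      integral_indicator_one hA0, measureReal_restrict_apply hA0]
    rw [← h_rc i t, iInf_subtype']
    rfl
  -- Here `n ≠ 0` is used: the null sets lie in some `F i t`.
  have hmeas : Measurable[⨆ i, F i t] (A.indicator (1 : Ω → ℝ)) :=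
    measurable_of_ae_eq_s5 (fun N hN => le_iSup (fun i => (F i t : MeasurableSpace Ω))
      (Classical.arbitrary _) N (h_null _ N hN t)) hae stronglyMeasurable_condExp.measurable
  have hpre : A = A.indicator (1 : Ω → ℝ) ⁻¹' {1} := by
    ext ω
    by_cases h : ω ∈ A <;> simp [h]
  rw [hpre]
  exact hmeas (measurableSet_singleton 1)
end

section
/- Let F^1, …, F^n be right-continuous filtrations on a probability space that are jointly independent, and let G be the filtration defined by G_t := ⨆_{j=1}^n F^j_t. If, for some index i, M is an F^i-martingale, then M is a G-martingale. (Martingale part of the Corollary to Theorem 4.1.) -/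
/-!
For `s ≤ t` the increment `M t - M s` is measurable with respect to `F^i_∞` and has vanishing
conditional expectation given `F^i_s`. Moreover `G s = F^i_s ⊔ b`, where
`b := ⨆ j ≠ i, F^j_s` is independent of `F^i_∞`. Conditioning additionally on such a `b` keeps
the conditional expectation equal to zero (`condExp_sup_eq_zero_of_indep`, a π-λ argument on the
sets `A ∩ B` with `A ∈ F^i_s` and `B ∈ b`), so that `E[M t | G s] = E[M s | G s] = M s`.
-/

open MeasureTheory ProbabilityTheory Filter
open scoped NNReal

/-- The filtration `t ↦ ⨆ j, F j t` generated by a finite family of filtrations. -/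
def iSupFiltration {Ω : Type*} {m : MeasurableSpace Ω} {n : ℕ}
    (F : Fin n → Filtration ℝ≥0 m) : Filtration ℝ≥0 m where
  seq t := ⨆ j, F j t
  mono' := fun _ _ hst => iSup_mono fun j => (F j).mono hst
  le' := fun t => iSup_le fun j => (F j).le t

/-- Enlarging the conditioning σ-algebra `a` by a σ-algebra `b` independent of the pair `a`
and `h` (both living on `c`) preserves vanishing of the conditional expectation: the sets `A ∩ B` with `A ∈ a` and `B ∈ b` form a π-system generating `a ⊔ b`, and
`∫ x in A ∩ B, h x ∂μ = μ B * ∫ x in A, h x ∂μ = 0` by independence. -/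
lemma condExp_sup_eq_zero_of_indep
    {Ω : Type*} {m : MeasurableSpace Ω} {μ : Measure Ω} [IsProbabilityMeasure μ]
    {a b c : MeasurableSpace Ω} (hac : a ≤ c) (hb : b ≤ m) (hc : c ≤ m)
    (hind : Indep c b μ) {h : Ω → ℝ} (hint : Integrable h μ)
    (hmeas : StronglyMeasurable[c] h) (hzero : μ[h | a] =ᵐ[μ] 0) :
    μ[h | a ⊔ b] =ᵐ[μ] 0 := by
  have ha : a ≤ m := hac.trans hc
  have hab : a ⊔ b ≤ m := sup_le ha hb
  have hA : ∀ A, MeasurableSet[a] A → ∫ x in A, h x ∂μ = 0 := by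
    intro A hA
    rw [← setIntegral_condExp ha hint hA, setIntegral_congr_ae (g := fun _ => (0 : ℝ)) (ha _ hA)
      (hzero.mono fun x hx _ => hx)]
    simp
  have hAB : ∀ A, MeasurableSet[a] A → ∀ B, MeasurableSet[b] B → ∫ x in A ∩ B, h x ∂μ = 0 := by
    intro A hAm B hBm
    have h1 : μ[A.indicator h | b] =ᵐ[μ] fun _ => ∫ x, A.indicator h x ∂μ :=
      condExp_indep_eq hc hb (hmeas.indicator (hac _ hAm)) hind
    have h2 : ∫ x, A.indicator h x ∂μ = 0 := by
      rw [integral_indicator (ha _ hAm)]; exact hA A hAm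
    rw [Set.inter_comm, ← setIntegral_indicator (ha _ hAm),
      ← setIntegral_condExp hb (hint.indicator (ha _ hAm)) hBm,
      setIntegral_congr_ae (g := fun _ => (0 : ℝ)) (hb _ hBm)
        (h1.mono fun x hx _ => by rw [hx, h2])]
    simp
  have huniv : ∫ x, h x ∂μ = 0 := by simpa using hA Set.univ MeasurableSet.univ
  let P : Set (Set Ω) :=
    Set.image2 (· ∩ ·) {A | MeasurableSet[a] A} {B | MeasurableSet[b] B}
  have hPi : IsPiSystem P := by
    rintro _ ⟨A, hA1, B, hB1, rfl⟩ _ ⟨A', hA2, B', hB2, rfl⟩ _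
    exact ⟨A ∩ A', MeasurableSet.inter hA1 hA2, B ∩ B', MeasurableSet.inter hB1 hB2,
      Set.inter_inter_inter_comm A A' B B'⟩
  have hgen : a ⊔ b = MeasurableSpace.generateFrom P := by
    apply le_antisymm
    · refine sup_le (fun A hA1 => ?_) (fun B hB1 => ?_)
      · exact MeasurableSpace.measurableSet_generateFrom
          ⟨A, hA1, Set.univ, MeasurableSet.univ, Set.inter_univ A⟩
      · exact MeasurableSpace.measurableSet_generateFrom
          ⟨Set.univ, MeasurableSet.univ, B, hB1, Set.univ_inter B⟩
    · refine MeasurableSpace.generateFrom_le ?_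
      rintro _ ⟨A, hA1, B, hB1, rfl⟩
      have hA2 : MeasurableSet[a ⊔ b] A := (le_sup_left : a ≤ a ⊔ b) _ hA1
      have hB2 : MeasurableSet[a ⊔ b] B := (le_sup_right : b ≤ a ⊔ b) _ hB1
      exact MeasurableSet.inter hA2 hB2
  have hall : ∀ s, MeasurableSet[a ⊔ b] s → ∫ x in s, h x ∂μ = 0 := by
    intro s hs
    induction s, hs using MeasurableSpace.induction_on_inter hgen hPi with
    | empty => simp
    | basic s hs =>
      obtain ⟨A, hA1, B, hB1, rfl⟩ := hs
      exact hAB A hA1 B hB1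
    | compl s hs ih =>
      have := integral_add_compl (hab _ hs) hint
      linarith
    | iUnion f hd hf ih =>
      rw [integral_iUnion (fun i => hab _ (hf i)) hd hint.integrableOn]
      simp [ih]
  symm
  refine ae_eq_condExp_of_forall_setIntegral_eq hab hint (fun _ _ _ => integrableOn_zero)
    (fun s hs _ => ?_) stronglyMeasurable_zero.aestronglyMeasurable
  rw [hall s hs]
  simp

/-- **Corollary to Theorem 4.1, martingale part.** If `F^1, …, F^n` are jointly
independent right-continuous filtrations and `M` is an `F^i`-martingale for some `i`,
then `M` is a martingale with respect to the filtration `G` given by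
`G t := ⨆ j, F j t`. -/
theorem martingale_iSup_of_iIndep
    {Ω : Type*} {m : MeasurableSpace Ω} {μ : Measure Ω}
    [IsProbabilityMeasure μ] {n : ℕ}
    (F : Fin n → Filtration ℝ≥0 m)
    (h_rc : ∀ i (t : ℝ≥0), ⨅ s ∈ Set.Ioi t, F i s = F i t)
    (h_indep : iIndep (fun i => ⨆ t : ℝ≥0, F i t) μ)
    (i : Fin n) (M : ℝ≥0 → Ω → ℝ) (hM : Martingale M (F i) μ) :
    Martingale M (iSupFiltration F) μ := by
  have hle : ∀ j, (⨆ t : ℝ≥0, F j t) ≤ m := fun j => iSup_le fun t => (F j).le t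
  have hFG : ∀ t, F i t ≤ iSupFiltration F t := fun t => le_iSup (fun j => F j t) i
  refine ⟨fun t => (hM.1 t).mono (hFG t), fun s t hst => ?_⟩
  -- The σ-algebra of all the other filtrations at time `s` is independent of `F^i_∞`.
  let b : MeasurableSpace Ω := ⨆ j ∈ ({i}ᶜ : Set (Fin n)), F j s
  have hb : b ≤ m := iSup₂_le fun j _ => (F j).le s
  have hsplit : iSupFiltration F s = F i s ⊔ b := by
    apply le_antisymm
    · refine iSup_le fun j => ?_
      by_cases hj : j = i
      · subst hj; exact le_sup_left
      · exact le_sup_of_le_right (le_iSup₂_of_le j hj le_rfl)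
    · exact sup_le (hFG s) (iSup₂_le fun j _ => le_iSup (fun j => F j s) j)
  have hind : Indep (⨆ t : ℝ≥0, F i t) b μ := by
    have h1 := indep_iSup_of_disjoint hle h_indep
      (S := {i}) (T := {i}ᶜ) disjoint_compl_right
    have h2 : b ≤ ⨆ j ∈ ({i}ᶜ : Set (Fin n)), ⨆ t : ℝ≥0, F j t :=
      iSup₂_mono fun j _ => le_iSup (fun t => F j t) s
    exact indep_of_indep_of_le_right
      (indep_of_indep_of_le_left h1 (le_iSup₂_of_le i rfl le_rfl)) h2
  have hcent : μ[M t - M s | F i s] =ᵐ[μ] 0 := by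
    filter_upwards [condExp_sub (hM.integrable t) (hM.integrable s) (F i s), hM.2 s t hst,
      hM.2 s s le_rfl] with x h1 h2 h3
    rw [h1, Pi.sub_apply, h2, h3, sub_self, Pi.zero_apply]
  have hmeas : ∀ r, StronglyMeasurable[⨆ t : ℝ≥0, F i t] (M r) := fun r =>
    (hM.1 r).mono (le_iSup (fun t => F i t) r)
  have hkey := condExp_sup_eq_zero_of_indep (le_iSup (fun t => F i t) s) hb (hle i) hind
    ((hM.integrable t).sub (hM.integrable s)) ((hmeas t).sub (hmeas s)) hcent
  rw [← hsplit] at hkey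
  have hself : μ[M s | iSupFiltration F s] = M s :=
    condExp_of_stronglyMeasurable ((iSupFiltration F).le s) ((hM.1 s).mono (hFG s))
      (hM.integrable s)
  filter_upwards [condExp_sub (hM.integrable t) (hM.integrable s) (iSupFiltration F s), hkey]
    with x h1 h2
  rw [h2, Pi.sub_apply, hself, Pi.zero_apply] at h1
  linarith
end
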